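/- arXiv:1112.5134 — 2 statements merged into one kernel-verified Lean document; each statement's English description precedes it below -/
import Mathlib

section
/- (Riemann–Roch for weighted graphs) Let (G, ω) be a weighted graph, i.e., a finite connected multigraph G together with a weight function ω: V(G) → ℤ_{≥0}, of genus g = b₁(G) + Σ_{v} ω(v). Then for every D ∈ Div(G, ω): r_{(G,ω)}(D) − r_{(G,ω)}(K_{(G,ω)} − D) = deg D − g + 1. -/
/-- A finite multigraph: vertices `V`, edges `E`, each edge has an (arbitrarily
ordered) pair of endpoints.  Loops are edges whose two endpoints coincide. -/
structure Multigraph where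
  V : Type
  E : Type
  [decV : DecidableEq V]
  [fintV : Fintype V]
  [decE : DecidableEq E]
  [fintE : Fintype E]
  ends : E → V × V

attribute [instance] Multigraph.decV Multigraph.fintV Multigraph.decE Multigraph.fintE

namespace Multigraph

variable (G : Multigraph)

/-- Two vertices are adjacent if some edge joins them. -/
def Adj (v w : G.V) : Prop := ∃ e : G.E, G.ends e = (v, w) ∨ G.ends e = (w, v)

/-- A multigraph is connected if it is nonempty and any two vertices are joined by a walk. -/
def Connected : Prop := Nonempty G.V ∧ ∀ v w : G.V, Relation.ReflTransGen G.Adj v w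

/-- The number of edges joining `v` and `w`. -/
def numEdges (v w : G.V) : ℕ :=
  (Finset.univ.filter fun e : G.E => G.ends e = (v, w) ∨ G.ends e = (w, v)).card

/-- The number of loops based at `v`. -/
def numLoops (v : G.V) : ℕ :=
  (Finset.univ.filter fun e : G.E => G.ends e = (v, v)).card

/-- The valency of `v` (loops count twice). -/
def valency (v : G.V) : ℕ :=
  ∑ e : G.E, ((if (G.ends e).1 = v then 1 else 0) + (if (G.ends e).2 = v then 1 else 0))

/-- The intersection product on vertices: `(v·w)` is the number of edges joining `v` and
`w` when `v ≠ w`, and `(v·v) = -val(v) + 2 loop(v)`. -/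
def inter (v w : G.V) : ℤ :=
  if v = w then -(G.valency v : ℤ) + 2 * (G.numLoops v : ℤ) else (G.numEdges v w : ℤ)

/-- The principal divisor `T_v = Σ_w (v·w) w`. -/
def T (v : G.V) : G.V → ℤ := fun w => G.inter v w

/-- The group of principal divisors, generated by the `T_v`. -/
def Prin : AddSubgroup (G.V → ℤ) := AddSubgroup.closure (Set.range G.T)

/-- The Jacobian group `Div(G)/Prin(G)`. -/
abbrev Jac := (G.V → ℤ) ⧸ G.Prin

/-- A divisor is effective if all its coefficients are nonnegative. -/
def Effective {α : Type} (D : α → ℤ) : Prop := ∀ v, 0 ≤ D v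

/-- The degree of a divisor. -/
def degree {α : Type} [Fintype α] (D : α → ℤ) : ℤ := ∑ v, D v

/-- The Baker–Norine rank of a divisor: `-1` if no effective divisor is linearly
equivalent to `D`, and otherwise the largest `k ≥ 0` such that for every effective
divisor `E` of degree `k` some effective divisor is linearly equivalent to `D - E`. -/
noncomputable def rank (D : G.V → ℤ) : ℤ :=
  sSup {r : ℤ | r = -1 ∨ (0 ≤ r ∧ ∀ E : G.V → ℤ, Effective E → degree E = r →
      ∃ F : G.V → ℤ, Effective F ∧ D - E - F ∈ G.Prin)}

/-- An edge is a loop if its two endpoints coincide. -/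
def IsLoop (e : G.E) : Prop := (G.ends e).1 = (G.ends e).2

/-- The refinement of `G` obtained by inserting `n e` new vertices in the interior of
each edge `e` (subdividing `e` into `n e + 1` edges). -/
def subdivide (n : G.E → ℕ) : Multigraph where
  V := G.V ⊕ (Σ e : G.E, Fin (n e))
  E := Σ e : G.E, Fin (n e + 1)
  ends := fun x =>
    (if h : (x.2 : ℕ) = 0 then Sum.inl (G.ends x.1).1
        else Sum.inr ⟨x.1, ⟨(x.2 : ℕ) - 1, by have := x.2.isLt; omega⟩⟩,
     if h : (x.2 : ℕ) = n x.1 then Sum.inl (G.ends x.1).2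
        else Sum.inr ⟨x.1, ⟨(x.2 : ℕ), by have := x.2.isLt; omega⟩⟩)

/-- The natural map `σ* : Div(G) → Div(G̃)` to a refinement, extending a divisor by
zero on the new vertices. -/
def subdivMap (n : G.E → ℕ) (D : G.V → ℤ) : (G.subdivide n).V → ℤ := Sum.elim D 0

/-- `Ĝ`: the loopless refinement obtained by inserting one new vertex in the interior of
every loop-edge. -/
def hat : Multigraph := G.subdivide fun e => if (G.ends e).1 = (G.ends e).2 then 1 else 0

/-- The rank `r#_G(D) := r_{Ĝ}(σ* D)`. -/
noncomputable def rankSharp (D : G.V → ℤ) : ℤ :=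
  G.hat.rank (G.subdivMap (fun e => if (G.ends e).1 = (G.ends e).2 then 1 else 0) D)

/-- A multigraph is loopless if no edge is a loop. -/
def Loopless : Prop := ∀ e : G.E, (G.ends e).1 ≠ (G.ends e).2

/-- The genus (first Betti number) `g = |E| - |V| + 1` of a connected graph. -/
def genus : ℤ := (Fintype.card G.E : ℤ) - (Fintype.card G.V : ℤ) + 1

/-- The canonical divisor `K#_G = Σ_v (val(v) - 2) v`. -/
def canonical : G.V → ℤ := fun v => (G.valency v : ℤ) - 2

/-- The loopless graph obtained from `G` by removing all loop-edges. -/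
def removeLoops : Multigraph where
  V := G.V
  E := {e : G.E // (G.ends e).1 ≠ (G.ends e).2}
  ends := fun e => G.ends e.1

/-- The virtual graph `G^ω` of a weighted graph `(G, ω)`: attach `ω v` loops at each
vertex `v`. -/
def virt (w : G.V → ℕ) : Multigraph where
  V := G.V
  E := G.E ⊕ (Σ v : G.V, Fin (w v))
  ends := Sum.elim G.ends fun p => (p.1, p.1)

/-- The rank of a divisor on the weighted graph `(G, ω)`: `r_{(G,ω)}(D) := r#_{G^ω}(D)`. -/
noncomputable def rankW (w : G.V → ℕ) (D : G.V → ℤ) : ℤ := (G.virt w).rankSharp D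

/-- The canonical divisor of the weighted graph `(G, ω)`. -/
def canonicalW (w : G.V → ℕ) : G.V → ℤ := fun v => (G.valency v : ℤ) + 2 * (w v : ℤ) - 2

/-- The genus of the weighted graph `(G, ω)`: `b₁(G) + Σ_v ω(v)`. -/
def genusW (w : G.V → ℕ) : ℤ := G.genus + ∑ v, (w v : ℤ)

/-- The rose `R_g`: one vertex and `g` loop-edges. -/
def rose (g : ℕ) : Multigraph where
  V := Unit
  E := Fin g
  ends := fun _ => ((), ())

/-- The subgraph of `G` determined by a set of vertices and a set of edges with
endpoints among them. -/
def subgraph (Vs : Finset G.V) (Es : Finset G.E)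
    (h : ∀ e ∈ Es, (G.ends e).1 ∈ Vs ∧ (G.ends e).2 ∈ Vs) : Multigraph where
  V := {x : G.V // x ∈ Vs}
  E := {e : G.E // e ∈ Es}
  ends := fun e => (⟨(G.ends e.1).1, (h e.1 e.2).1⟩, ⟨(G.ends e.1).2, (h e.1 e.2).2⟩)

/-- Extension of a divisor on a subgraph by zero: `ι_* : Div(H) → Div(G)`. -/
def iota (Vs : Finset G.V) (D : {x : G.V // x ∈ Vs} → ℤ) : G.V → ℤ :=
  fun x => if h : x ∈ Vs then D ⟨x, h⟩ else 0

end Multigraph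

namespace Multigraph

/-- A decomposition `G = H₁ ∨ H₂` of `G` associated to a cut vertex `v`:  `H₁`, `H₂` are
connected subgraphs with `V(H₁) ∩ V(H₂) = {v}`, `E(H₁) ∩ E(H₂) = ∅`, covering `G`. -/
structure Wedge (G : Multigraph) where
  v : G.V
  V1 : Finset G.V
  V2 : Finset G.V
  hv1 : v ∈ V1
  hv2 : v ∈ V2
  E1 : Finset G.E
  E2 : Finset G.E
  cover_V : V1 ∪ V2 = Finset.univ
  inter_V : V1 ∩ V2 = {v}
  cover_E : E1 ∪ E2 = Finset.univ
  disj_E : E1 ∩ E2 = ∅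
  ends1 : ∀ e ∈ E1, (G.ends e).1 ∈ V1 ∧ (G.ends e).2 ∈ V1
  ends2 : ∀ e ∈ E2, (G.ends e).1 ∈ V2 ∧ (G.ends e).2 ∈ V2
  conn1 : (G.subgraph V1 E1 ends1).Connected
  conn2 : (G.subgraph V2 E2 ends2).Connected

/-- The first subgraph `H₁` of a wedge decomposition. -/
def Wedge.H1 {G : Multigraph} (W : G.Wedge) : Multigraph := G.subgraph W.V1 W.E1 W.ends1

/-- The second subgraph `H₂` of a wedge decomposition. -/
def Wedge.H2 {G : Multigraph} (W : G.Wedge) : Multigraph := G.subgraph W.V2 W.E2 W.ends2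

variable (G : Multigraph)

/-- The divisor `div(f)` of an integer-valued function `f` on the vertices
(loops contribute zero). -/
def divOf (f : G.V → ℤ) : G.V → ℤ := fun v =>
  ∑ e : G.E, ((if (G.ends e).1 = v then f v - f (G.ends e).2 else 0)
            + (if (G.ends e).2 = v then f v - f (G.ends e).1 else 0))

/-- An isomorphism of multigraphs (edges may be matched with either orientation). -/
structure Iso (G H : Multigraph) where
  vEquiv : G.V ≃ H.V
  eEquiv : G.E ≃ H.E
  compat : ∀ e : G.E,
    H.ends (eEquiv e) = (vEquiv (G.ends e).1, vEquiv (G.ends e).2) ∨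
    H.ends (eEquiv e) = (vEquiv (G.ends e).2, vEquiv (G.ends e).1)

end Multigraph

/-!
The Laplacian of a graph does not see its loops, so a multigraph may be replaced by its integer
adjacency matrix, and subdividing the loops of the virtual graph `G^ω` yields a loopless graph with
the same genus and, up to extension by zero, the same canonical divisor `K`. There the argument is
that of Baker and Norine. An ordering of the vertices defines a divisor `ν` of degree `g - 1` with
`|ν| = ∅`, and reversing the ordering replaces `ν` by `K - ν`. Conversely, if `|D| = ∅`, then the
`q`-reduced divisor equivalent to `D` is negative at `q`, so a fire started at `q` burns the whole
graph, and the order of burning gives a `ν` above it. Applying this to `D - E` for an effective `E`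
of least degree with `|D - E| = ∅` yields `r(K - D) ≤ r(D) - deg D + g - 1`. The same inequality for
`K - D` in place of `D` is the reverse one.
-/

namespace ChipFiring

open Finset Matrix Relation

section Laplacian

variable {V R : Type*} [Fintype V] [DecidableEq V] [CommRing R] {a : Matrix V V R}

/-- The Laplacian of the weighted graph with adjacency matrix `a`. The diagonal of `a`, that is, the
loops, cancels. -/
def laplacian (a : Matrix V V R) : Matrix V V R :=
  diagonal (fun v ↦ ∑ w, a v w) - a

theorem laplacian_mulVec_apply (a : Matrix V V R) (f : V → R) (v : V) :
    (laplacian a *ᵥ f) v = ∑ w, a v w * (f v - f w) := by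
  rw [laplacian, sub_mulVec, Pi.sub_apply, mulVec_diagonal]
  simp only [mulVec, dotProduct, mul_sub, sum_sub_distrib, sum_mul]

theorem laplacian_mulVec_const (a : Matrix V V R) (c : R) :
    laplacian a *ᵥ Function.const V c = 0 := by
  ext v
  simp [laplacian_mulVec_apply]

theorem laplacian_mulVec_indicator_compl_of_notMem (a : Matrix V V R) {A : Finset V} {v : V}
    (hv : v ∉ A) :
    (laplacian a *ᵥ (A : Set V)ᶜ.indicator 1) v = ∑ w ∈ A, a v w := by
  rw [laplacian_mulVec_apply, ← sum_subset (subset_univ A) fun w _ hw ↦ by simp [hv, hw]]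
  exact sum_congr rfl fun w hw ↦ by simp [hv, hw]

theorem laplacian_mulVec_indicator_compl_of_mem (a : Matrix V V R) {A : Finset V} {v : V}
    (hv : v ∈ A) :
    (laplacian a *ᵥ (A : Set V)ᶜ.indicator 1) v = -∑ w ∈ Aᶜ, a v w := by
  rw [laplacian_mulVec_apply, ← sum_neg_distrib,
    ← sum_subset (subset_univ Aᶜ) fun w _ hw ↦ by simp [hv, notMem_compl.1 hw]]
  exact sum_congr rfl fun w hw ↦ by simp [hv, mem_compl.1 hw]

theorem isSymm_laplacian (ha : a.IsSymm) : (laplacian a).IsSymm :=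
  (isSymm_diagonal _).sub ha

theorem dotProduct_laplacian_mulVec_comm (ha : a.IsSymm) (f g : V → R) :
    g ⬝ᵥ laplacian a *ᵥ f = f ⬝ᵥ laplacian a *ᵥ g := by
  rw [dotProduct_mulVec, ← mulVec_transpose, (isSymm_laplacian ha).eq, dotProduct_comm]

theorem sum_laplacian_mulVec (ha : a.IsSymm) (f : V → R) :
    ∑ v, (laplacian a *ᵥ f) v = 0 := by
  calc ∑ v, (laplacian a *ᵥ f) v
      = Function.const V 1 ⬝ᵥ laplacian a *ᵥ f := by simp [dotProduct]
    _ = 0 := by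
        rw [dotProduct_laplacian_mulVec_comm ha, laplacian_mulVec_const, dotProduct_zero]

end Laplacian

section Winnable

variable {V : Type*} [Fintype V] [DecidableEq V] {a : Matrix V V ℤ} {D : V → ℤ}

/-- The complete linear system `|D|` is nonempty: some firing script `f` turns `D` into an effective
divisor. -/
def Winnable (a : Matrix V V ℤ) (D : V → ℤ) : Prop :=
  ∃ f, 0 ≤ D - laplacian a *ᵥ f

theorem Winnable.mono {D' : V → ℤ} (hD : Winnable a D) (h : D ≤ D') : Winnable a D' :=
  hD.imp fun _ hf ↦ hf.trans (sub_le_sub_right h _)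

theorem winnable_sub_laplacian_mulVec_iff (f : V → ℤ) :
    Winnable a (D - laplacian a *ᵥ f) ↔ Winnable a D := by
  constructor
  · rintro ⟨g, hg⟩
    exact ⟨f + g, by rwa [mulVec_add, ← sub_sub]⟩
  · rintro ⟨g, hg⟩
    exact ⟨g - f, by rwa [mulVec_sub, sub_sub, add_sub_cancel]⟩

theorem Winnable.sum_nonneg (ha : a.IsSymm) (hD : Winnable a D) : 0 ≤ ∑ v, D v := by
  obtain ⟨f, hf⟩ := hD
  calc 0 ≤ ∑ v, (D - laplacian a *ᵥ f) v := Finset.sum_nonneg fun v _ ↦ hf v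
    _ = ∑ v, D v := by simp [sum_sub_distrib, sum_laplacian_mulVec ha]

end Winnable

section Connected

variable {V R : Type*} [Zero R] [LinearOrder R] {a : Matrix V V R}

/-- Connectedness of the graph with adjacency matrix `a`, loops being irrelevant: unlike
`Matrix.IsIrreducible`, it holds for a single vertex without edges. -/
def IsConnected (a : Matrix V V R) : Prop :=
  ∀ v w, ReflTransGen (fun u u' ↦ 0 < a u u') v w

theorem IsConnected.exists_pos (hconn : IsConnected a) {A : Finset V} {x y : V} (hx : x ∉ A)
    (hy : y ∈ A) : ∃ v ∉ A, ∃ w ∈ A, 0 < a v w := by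
  by_contra! h
  refine absurd hy ?_
  clear hy
  induction hconn x y with
  | refl => exact hx
  | tail _ hadj ih => exact fun hmem ↦ (h _ ih _ hmem).not_gt hadj

end Connected

section MinimumPrinciple

variable {V R : Type*} [Fintype V] [DecidableEq V] [CommRing R] [LinearOrder R]
  [IsStrictOrderedRing R] {a : Matrix V V R}

theorem le_of_forall_ne_laplacian_pos (hnonneg : ∀ v w, 0 ≤ a v w) {g : V → R} {q : V}
    (hg : ∀ v ≠ q, 0 < (laplacian a *ᵥ g) v) (v : V) : g q ≤ g v := by
  have : Nonempty V := ⟨q⟩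
  obtain ⟨m, hm⟩ := Finite.exists_min g
  suffices m = q from this ▸ hm v
  by_contra hmq
  refine (hg m hmq).not_ge ?_
  rw [laplacian_mulVec_apply]
  exact sum_nonpos fun w _ ↦
    mul_nonpos_of_nonneg_of_nonpos (hnonneg m w) (sub_nonpos.2 (hm w))

end MinimumPrinciple

section Reduced

variable {V : Type*} [Fintype V] [DecidableEq V] {a : Matrix V V ℤ}

/-- `D` is `q`-reduced: it is effective away from `q`, and firing any nonempty set of vertices
avoiding `q` (here the complement of `A`) puts some vertex of that set into debt. -/
def IsReduced (a : Matrix V V ℤ) (q : V) (D : V → ℤ) : Prop :=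
  (∀ v ≠ q, 0 ≤ D v) ∧ ∀ A : Finset V, q ∈ A → A ≠ univ → ∃ v ∉ A, D v < ∑ w ∈ A, a v w

-- Grow `A` by a neighbouring vertex `v`; adding a large multiple of the indicator of `Aᶜ` corrects
-- the value at `v` and only increases the values elsewhere outside `A`.
theorem exists_forall_notMem_one_le_laplacian (hnonneg : ∀ v w, 0 ≤ a v w) (hconn : IsConnected a)
    {A : Finset V} (hA : A.Nonempty) : ∃ g : V → ℤ, ∀ v ∉ A, 1 ≤ (laplacian a *ᵥ g) v := by
  induction A using WellFoundedGT.induction with | _ A ih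
  by_cases hA' : A = univ
  · exact ⟨0, by simp [hA']⟩
  obtain ⟨x, hx⟩ : ∃ x, x ∉ A := by simpa [eq_univ_iff_forall] using hA'
  obtain ⟨y, hy⟩ := hA
  obtain ⟨v, hv, u, hu, hvu⟩ := hconn.exists_pos hx hy
  obtain ⟨g, hg⟩ := ih (insert v A) (ssubset_insert hv) (insert_nonempty v A)
  set N := |(laplacian a *ᵥ g) v| + 1
  refine ⟨g + N • (A : Set V)ᶜ.indicator 1, fun z hz ↦ ?_⟩
  rw [mulVec_add, mulVec_smul, Pi.add_apply, Pi.smul_apply, smul_eq_mul,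
    laplacian_mulVec_indicator_compl_of_notMem a hz]
  have hN : 1 ≤ N := le_add_of_nonneg_left (abs_nonneg _)
  by_cases hzv : z = v
  · subst hzv
    have hle : 1 ≤ ∑ w ∈ A, a z w :=
      hvu.trans_le (single_le_sum (fun w _ ↦ hnonneg z w) hu)
    linarith [neg_abs_le ((laplacian a *ᵥ g) z), le_mul_of_one_le_right (by lia : 0 ≤ N) hle]
  · have hle : 0 ≤ N * ∑ w ∈ A, a z w :=
      mul_nonneg (by lia) (sum_nonneg fun w _ ↦ hnonneg z w)
    linarith [hg z (by simp [hzv, hz])]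

theorem exists_one_le_laplacian (hnonneg : ∀ v w, 0 ≤ a v w) (hconn : IsConnected a) (q : V) :
    ∃ g : V → ℤ, 0 ≤ g ∧ g q = 0 ∧ ∀ v ≠ q, 1 ≤ (laplacian a *ᵥ g) v := by
  obtain ⟨g, hg⟩ := exists_forall_notMem_one_le_laplacian hnonneg hconn (singleton_nonempty q)
  simp only [mem_singleton] at hg
  refine ⟨g - Function.const V (g q), fun v ↦ ?_, sub_self _, fun v hv ↦ ?_⟩
  · exact sub_nonneg.2 (le_of_forall_ne_laplacian_pos hnonneg hg v)
  · simpa [mulVec_sub, laplacian_mulVec_const] using hg v hv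

theorem exists_forall_ne_nonneg (hnonneg : ∀ v w, 0 ≤ a v w) (hconn : IsConnected a) (q : V)
    (D : V → ℤ) : ∃ f, ∀ v ≠ q, 0 ≤ (D - laplacian a *ᵥ f) v := by
  obtain ⟨g, -, -, hg⟩ := exists_one_le_laplacian hnonneg hconn q
  refine ⟨-((∑ v, |D v|) • g), fun v hv ↦ ?_⟩
  have hDv : |D v| ≤ ∑ v, |D v| := single_le_sum (fun w _ ↦ abs_nonneg (D w)) (mem_univ v)
  have hmul : |D v| ≤ (∑ v, |D v|) * (laplacian a *ᵥ g) v :=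
    hDv.trans (le_mul_of_one_le_right ((abs_nonneg _).trans hDv) (hg v hv))
  simp only [mulVec_neg, mulVec_smul, sub_neg_eq_add, Pi.add_apply, Pi.smul_apply, smul_eq_mul]
  linarith [neg_abs_le (D v)]

-- With `g` as in `exists_one_le_laplacian`, a legal firing of a set avoiding `q` strictly lowers
-- the potential `g ⬝ᵥ D`, which is nonnegative on divisors effective away from `q`.
theorem exists_isReduced (ha : a.IsSymm) (hnonneg : ∀ v w, 0 ≤ a v w) (hconn : IsConnected a)
    (q : V) (D : V → ℤ) : ∃ f, IsReduced a q (D - laplacian a *ᵥ f) := by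
  obtain ⟨g, hg, hgq, hLg⟩ := exists_one_le_laplacian hnonneg hconn q
  obtain ⟨f₀, hf₀⟩ := exists_forall_ne_nonneg hnonneg hconn q D
  have hbdd (z : ℤ) : (∃ f, (∀ v ≠ q, 0 ≤ (D - laplacian a *ᵥ f) v) ∧
      g ⬝ᵥ (D - laplacian a *ᵥ f) = z) → 0 ≤ z := by
    rintro ⟨f, hf, rfl⟩
    refine sum_nonneg fun v _ ↦ ?_
    obtain rfl | hv := eq_or_ne v q
    · rw [hgq, zero_mul]
    · exact mul_nonneg (hg v) (hf v hv)
  obtain ⟨_, ⟨f, hf, rfl⟩, hmin⟩ := Int.exists_least_of_bdd ⟨0, hbdd⟩ ⟨_, f₀, hf₀, rfl⟩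
  refine ⟨f, hf, fun A hqA hA ↦ ?_⟩
  by_contra! hlegal
  set s : V → ℤ := (A : Set V)ᶜ.indicator 1
  have hfired (v : V) (hv : v ≠ q) : 0 ≤ (D - laplacian a *ᵥ (f + s)) v := by
    rw [mulVec_add, ← sub_sub, Pi.sub_apply]
    by_cases hvA : v ∈ A
    · rw [laplacian_mulVec_indicator_compl_of_mem a hvA, sub_neg_eq_add]
      exact add_nonneg (hf v hv) (sum_nonneg fun w _ ↦ hnonneg v w)
    · rw [laplacian_mulVec_indicator_compl_of_notMem a hvA]
      exact sub_nonneg.2 (hlegal v hvA)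
  have hdrop : 0 < g ⬝ᵥ laplacian a *ᵥ s := by
    obtain ⟨x, hx⟩ : ∃ x, x ∉ A := by simpa [eq_univ_iff_forall] using hA
    rw [dotProduct_laplacian_mulVec_comm ha]
    refine sum_pos' (fun v _ ↦ ?_) ⟨x, mem_univ x, ?_⟩
    · by_cases hvA : v ∈ A
      · simp [s, hvA]
      · simpa [s, hvA] using zero_le_one.trans (hLg v fun h ↦ hvA (h ▸ hqA))
    · simpa [s, hx] using zero_lt_one.trans_le (hLg x fun h ↦ hx (h ▸ hqA))
  have hle := hmin _ ⟨f + s, hfired, rfl⟩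
  rw [mulVec_add, ← sub_sub, dotProduct_sub g (D - _)] at hle
  linarith

end Reduced

section OrderDivisor

variable {V α : Type*} [Fintype V] [LinearOrder α] {a : Matrix V V ℤ} {D : V → ℤ}

/-- Baker and Norine's divisor `ν` of degree `g - 1` attached to the ordering of the vertices by
`p`. -/
def orderDivisor (a : Matrix V V ℤ) (p : V → α) (v : V) : ℤ :=
  ∑ w with p w < p v, a v w - 1

theorem sum_orderDivisor_toDual (ha : a.IsSymm) (p : V → α) :
    ∑ v, orderDivisor a (OrderDual.toDual ∘ p) v = ∑ v, orderDivisor a p v := by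
  simp only [orderDivisor, sum_sub_distrib, Function.comp_apply, OrderDual.toDual_lt_toDual,
    sum_filter]
  rw [sum_comm]
  simp only [ha.apply]

-- After firing `f`, the first vertex in the ordering among those where `f` is maximal is in debt.
theorem not_winnable_orderDivisor [DecidableEq V] [Nonempty V] (hnonneg : ∀ v w, 0 ≤ a v w)
    (p : V → α) : ¬Winnable a (orderDivisor a p) := by
  rintro ⟨f, hf⟩
  obtain ⟨m, hm⟩ := Finite.exists_max f
  obtain ⟨v, hv, hmin⟩ := exists_min_image {v | f v = f m} p ⟨m, by simp⟩
  simp only [mem_filter, mem_univ, true_and] at hv hmin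
  have hle : ∑ w with p w < p v, a v w ≤ (laplacian a *ᵥ f) v := by
    rw [laplacian_mulVec_apply, sum_filter]
    refine sum_le_sum fun w _ ↦ ?_
    have hfw : f w ≤ f v := hv ▸ hm w
    split_ifs with hlt
    · have hne : f w ≠ f m := fun h ↦ hlt.not_ge (hmin w h)
      exact le_mul_of_one_le_right (hnonneg v w) (by lia)
    · exact mul_nonneg (hnonneg v w) (sub_nonneg.2 hfw)
  have hfv : 0 ≤ orderDivisor a p v - (laplacian a *ᵥ f) v := hf v
  unfold orderDivisor at hfv
  lia

-- Dhar's burning algorithm: `R A v` means that `v` catches fire once `A` has burnt, and `p` records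
-- the burning times.
theorem exists_injective_of_forall_exists_notMem {R : Finset V → V → Prop}
    (hR : ∀ A ≠ univ, ∃ v ∉ A, R A v) :
    ∃ p : V → ℕ, p.Injective ∧ ∀ v, R {w | p w < p v} v := by
  classical
  suffices ∀ A : Finset V, ∃ p : V → ℕ, (∀ v, p v = 0 ↔ v ∈ A) ∧ Set.InjOn p (A : Set V)ᶜ ∧
      ∀ v ∉ A, R {w | p w < p v} v by
    simpa [Set.injOn_univ] using (this ∅).imp fun _ ↦ And.right
  intro A
  induction A using WellFoundedGT.induction with | _ A ih
  by_cases hA : A = univ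
  · exact ⟨0, by simp [hA]⟩
  obtain ⟨v, hv, hRv⟩ := hR A hA
  obtain ⟨p, hp, hinj, hRp⟩ := ih (insert v A) (ssubset_insert hv)
  have hpA {w : V} (hw : w ∈ A) : p w = 0 := (hp w).2 (mem_insert_of_mem hw)
  have hpv : p v = 0 := (hp v).2 (mem_insert_self v A)
  refine ⟨fun w ↦ if w ∈ A then 0 else p w + 1, fun w ↦ by simp, fun x hx y hy hxy ↦ ?_,
    fun x hx ↦ ?_⟩
  · have hpxy : p x = p y := by simpa [show x ∉ A from hx, show y ∉ A from hy] using hxy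
    by_cases hx0 : p x = 0
    · have hxv : x = v := (mem_insert.1 ((hp x).1 hx0)).resolve_right hx
      have hyv : y = v := (mem_insert.1 ((hp y).1 (hpxy ▸ hx0))).resolve_right hy
      exact hxv.trans hyv.symm
    · exact hinj (mt (hp x).2 hx0) (mt (hp y).2 (hpxy ▸ hx0)) hpxy
  · obtain rfl | hxv := eq_or_ne x v
    · convert hRv
      ext w
      by_cases hw : w ∈ A <;> simp [hw, hx, hpv]
    · have hxA : x ∉ insert v A := by simp [hxv, hx]
      convert hRp x hxA using 1
      ext w
      have hpx : 0 < p x := Nat.pos_of_ne_zero (mt (hp x).1 hxA)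
      by_cases hw : w ∈ A <;> simp [hw, hx, hpA, hpx]

theorem exists_sub_laplacian_le_orderDivisor [DecidableEq V] (ha : a.IsSymm)
    (hnonneg : ∀ v w, 0 ≤ a v w) (hconn : IsConnected a) (hD : ¬Winnable a D) :
    ∃ p : V → ℕ, p.Injective ∧ ∃ f, D - laplacian a *ᵥ f ≤ orderDivisor a p := by
  obtain ⟨q, -⟩ : ∃ q, D q < 0 := by
    by_contra! h
    exact hD ⟨0, by simpa [Pi.le_def] using h⟩
  obtain ⟨f, hf, hred⟩ := exists_isReduced ha hnonneg hconn q D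
  have hq : (D - laplacian a *ᵥ f) q < 0 := by
    by_contra! h
    refine hD ⟨f, fun v ↦ ?_⟩
    obtain rfl | hv := eq_or_ne v q
    exacts [h, hf v hv]
  have hburn (A : Finset V) (hA : A ≠ univ) :
      ∃ v ∉ A, (D - laplacian a *ᵥ f) v < ∑ w ∈ A, a v w := by
    by_cases hqA : q ∈ A
    · exact hred A hqA hA
    · exact ⟨q, hqA, hq.trans_le (sum_nonneg fun w _ ↦ hnonneg q w)⟩
  obtain ⟨p, hp, hlt⟩ := exists_injective_of_forall_exists_notMem hburn
  exact ⟨p, hp, f, fun v ↦ Int.le_sub_one_of_lt (hlt v)⟩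

end OrderDivisor

section RiemannRoch

variable {V : Type*} [Fintype V] [DecidableEq V] {a : Matrix V V ℤ}

/-- The canonical divisor `∑ v, (val v - 2) v` of the graph with adjacency matrix `a`, the valency
not counting loops. -/
def canonical (a : Matrix V V ℤ) (v : V) : ℤ :=
  ∑ w ∈ {v}ᶜ, a v w - 2

theorem orderDivisor_toDual {α : Type*} [LinearOrder α] (a : Matrix V V ℤ) {p : V → α}
    (hp : p.Injective) :
    orderDivisor a (OrderDual.toDual ∘ p) = canonical a - orderDivisor a p := by
  ext v
  have hsplit : ∑ w ∈ {v}ᶜ, a v w = ∑ w with p w < p v, a v w + ∑ w with p v < p w, a v w := by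
    rw [← sum_union (disjoint_filter.2 fun w _ ↦ lt_asymm)]
    refine sum_congr ?_ fun _ _ ↦ rfl
    ext w
    simp [← hp.ne_iff (x := w)]
  simp only [orderDivisor, canonical, Pi.sub_apply, Function.comp_apply, OrderDual.toDual_lt_toDual]
  lia

theorem two_mul_sum_orderDivisor {α : Type*} [LinearOrder α] (ha : a.IsSymm) {p : V → α}
    (hp : p.Injective) : 2 * ∑ v, orderDivisor a p v = ∑ v, canonical a v := by
  have hrev := sum_orderDivisor_toDual ha p
  simp only [orderDivisor_toDual a hp, Pi.sub_apply, sum_sub_distrib] at hrev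
  lia

/-- The degrees of the effective divisors `E` with `|D - E|` empty. -/
def unwinnableDegrees (a : Matrix V V ℤ) (D : V → ℤ) : Set ℤ :=
  {n | ∃ E, 0 ≤ E ∧ ∑ v, E v = n ∧ ¬Winnable a (D - E)}

/-- The Baker–Norine rank, as one less than the least degree of an effective divisor `E` with
`|D - E|` empty. -/
noncomputable def rank (a : Matrix V V ℤ) (D : V → ℤ) : ℤ :=
  sInf (unwinnableDegrees a D) - 1

theorem bddBelow_unwinnableDegrees (a : Matrix V V ℤ) (D : V → ℤ) :
    BddBelow (unwinnableDegrees a D) :=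
  ⟨0, by rintro _ ⟨E, hE, rfl, -⟩; exact sum_nonneg fun v _ ↦ hE v⟩

variable [Nonempty V]

theorem unwinnableDegrees_nonempty (ha : a.IsSymm) (D : V → ℤ) :
    (unwinnableDegrees a D).Nonempty := by
  refine ⟨_, fun v ↦ |D v| + 1, fun v ↦ by positivity, rfl, fun hwin ↦ ?_⟩
  refine hwin.sum_nonneg ha |>.not_gt (sum_neg (fun v _ ↦ ?_) univ_nonempty)
  simp only [Pi.sub_apply]
  linarith [le_abs_self (D v)]

theorem rank_add_one_mem_unwinnableDegrees (ha : a.IsSymm) (D : V → ℤ) :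
    rank a D + 1 ∈ unwinnableDegrees a D := by
  rw [rank, sub_add_cancel]
  exact Int.csInf_mem (unwinnableDegrees_nonempty ha D) (bddBelow_unwinnableDegrees a D)

theorem mem_unwinnableDegrees_iff (ha : a.IsSymm) {D : V → ℤ} {n : ℤ} :
    n ∈ unwinnableDegrees a D ↔ rank a D < n := by
  refine ⟨fun hn ↦ Int.sub_one_lt_of_le (csInf_le (bddBelow_unwinnableDegrees a D) hn),
    fun hn ↦ ?_⟩
  obtain ⟨E, hE, hdeg, hwin⟩ := rank_add_one_mem_unwinnableDegrees ha D
  obtain ⟨q⟩ := ‹Nonempty V›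
  have hle : E ≤ E + Pi.single q (n - (rank a D + 1)) :=
    le_add_of_nonneg_right (Pi.single_nonneg.2 (by lia))
  refine ⟨_, hE.trans hle, ?_, fun h ↦ hwin (h.mono (sub_le_sub_left hle D))⟩
  simp [sum_add_distrib, hdeg]

theorem neg_one_le_rank (ha : a.IsSymm) (D : V → ℤ) : -1 ≤ rank a D := by
  obtain ⟨E, hE, hdeg, -⟩ := rank_add_one_mem_unwinnableDegrees ha D
  linarith [sum_nonneg fun v (_ : v ∈ univ) ↦ hE v]

-- If `|D - E| = ∅`, then `D - E ≤ ν` up to equivalence for some order divisor `ν`. The effective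
-- difference `F` satisfies `|(K - D) - F| = ∅`, since `(K - D) - F ~ (K - ν) - E` and `K - ν` is
-- the order divisor of the reversed ordering.
theorem rank_canonical_sub_le (ha : a.IsSymm) (hnonneg : ∀ v w, 0 ≤ a v w) (hconn : IsConnected a)
    {g : ℤ} (hg : ∑ v, canonical a v = 2 * g - 2) (D : V → ℤ) :
    rank a (canonical a - D) ≤ rank a D - ∑ v, D v + g - 1 := by
  obtain ⟨E, hE, hdeg, hwin⟩ := rank_add_one_mem_unwinnableDegrees ha D
  obtain ⟨p, hp, f, hf⟩ := exists_sub_laplacian_le_orderDivisor ha hnonneg hconn hwin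
  set F : V → ℤ := orderDivisor a p - (D - E - laplacian a *ᵥ f)
  have hFwin : ¬Winnable a (canonical a - D - F) := by
    intro h
    refine not_winnable_orderDivisor hnonneg (OrderDual.toDual ∘ p) ?_
    rw [← winnable_sub_laplacian_mulVec_iff f, orderDivisor_toDual a hp]
    refine h.mono fun v ↦ ?_
    have hEv : 0 ≤ E v := hE v
    simp only [F, Pi.sub_apply]
    linarith
  have hFdeg : ∑ v, F v = g - 1 - ∑ v, D v + (rank a D + 1) := by
    have hν := two_mul_sum_orderDivisor ha hp
    simp only [F, Pi.sub_apply, sum_sub_distrib, sum_laplacian_mulVec ha, hdeg]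
    lia
  have hlt := (mem_unwinnableDegrees_iff ha).1 ⟨F, sub_nonneg.2 hf, hFdeg, hFwin⟩
  lia

theorem riemann_roch (ha : a.IsSymm) (hnonneg : ∀ v w, 0 ≤ a v w) (hconn : IsConnected a)
    {g : ℤ} (hg : ∑ v, canonical a v = 2 * g - 2) (D : V → ℤ) :
    rank a D - rank a (canonical a - D) = ∑ v, D v - g + 1 := by
  have hle := rank_canonical_sub_le ha hnonneg hconn hg D
  have hge := rank_canonical_sub_le ha hnonneg hconn hg (canonical a - D)
  simp only [sub_sub_cancel, Pi.sub_apply, sum_sub_distrib] at hge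
  lia

end RiemannRoch

end ChipFiring

namespace Multigraph

open Finset Matrix Relation

variable (G : Multigraph)

theorem reflTransGen_adj_symm {G : Multigraph} {v w : G.V} (h : ReflTransGen G.Adj v w) :
    ReflTransGen G.Adj w v :=
  have : Std.Symm G.Adj := ⟨fun _ _ ⟨e, he⟩ ↦ ⟨e, he.symm⟩⟩
  symm h

/-- The adjacency matrix, with the numbers of loops on the diagonal. -/
def adjMatrix : Matrix G.V G.V ℤ :=
  of fun v w ↦ (G.numEdges v w : ℤ)

theorem adjMatrix_isSymm : G.adjMatrix.IsSymm := by
  ext v w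
  simp [adjMatrix, numEdges, or_comm]

theorem adjMatrix_nonneg (v w : G.V) : 0 ≤ G.adjMatrix v w :=
  Int.natCast_nonneg _

theorem Connected.adjMatrix {G : Multigraph} (hG : G.Connected) :
    ChipFiring.IsConnected G.adjMatrix := by
  refine fun v w ↦ ReflTransGen.mono (r := G.Adj) (fun u u' h ↦ ?_) v w (hG.2 v w)
  obtain ⟨e, he⟩ := h
  exact Int.natCast_pos.2 (card_pos.2 ⟨e, by simpa using he⟩)

theorem sum_compl_singleton_adjMatrix (v : G.V) :
    ∑ w ∈ {v}ᶜ, G.adjMatrix v w = G.valency v - 2 * G.numLoops v := by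
  simp only [Multigraph.adjMatrix, of_apply, numEdges, valency, numLoops, card_filter,
    Nat.cast_sum, mul_sum]
  rw [sum_comm, ← sum_sub_distrib]
  refine sum_congr rfl fun e _ ↦ ?_
  obtain ⟨x, y⟩ := G.ends e
  by_cases hx : x = v <;> by_cases hy : y = v <;>
    simp [hx, hy, Prod.ext_iff, sum_ite_eq]

theorem laplacian_adjMatrix : ChipFiring.laplacian G.adjMatrix = -of G.inter := by
  ext v w
  obtain rfl | hvw := eq_or_ne v w
  · have hsum := sum_compl_singleton_adjMatrix G v
    have hadd := sum_compl_add_sum {v} (G.adjMatrix v)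
    simp only [sum_singleton] at hadd
    simp only [ChipFiring.laplacian, inter, Matrix.sub_apply, Matrix.neg_apply, of_apply,
      diagonal_apply_eq, if_true]
    lia
  · simp [ChipFiring.laplacian, inter, hvw, Multigraph.adjMatrix]

theorem mem_Prin_iff {D : G.V → ℤ} :
    D ∈ G.Prin ↔ ∃ f, ChipFiring.laplacian G.adjMatrix *ᵥ f = D := by
  have hcol : Set.range (ChipFiring.laplacian G.adjMatrix).col = -Set.range G.T := by
    rw [← Set.image_neg_eq_neg, ← Set.range_comp, ← row_transpose,
      (ChipFiring.isSymm_laplacian G.adjMatrix_isSymm).eq, laplacian_adjMatrix]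
    rfl
  rw [Prin, ← AddSubgroup.closure_neg, ← hcol, ← Submodule.span_int_eq_addSubgroupClosure,
    Submodule.mem_toAddSubgroup, ← range_mulVecLin, LinearMap.mem_range]
  rfl

theorem exists_effective_iff_winnable {D : G.V → ℤ} :
    (∃ F, Effective F ∧ D - F ∈ G.Prin) ↔ ChipFiring.Winnable G.adjMatrix D := by
  simp only [mem_Prin_iff]
  constructor
  · rintro ⟨F, hF, f, hf⟩
    exact ⟨f, by rwa [hf, sub_sub_cancel]⟩
  · rintro ⟨f, hf⟩
    exact ⟨_, hf, f, (sub_sub_cancel _ _).symm⟩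

theorem rank_eq [Nonempty G.V] (D : G.V → ℤ) :
    G.rank D = ChipFiring.rank G.adjMatrix D := by
  have hmem (r : ℤ) : (∀ E : G.V → ℤ, Effective E → degree E = r →
      ∃ F, Effective F ∧ D - E - F ∈ G.Prin) ↔ r ≤ ChipFiring.rank G.adjMatrix D := by
    rw [← not_lt, ← ChipFiring.mem_unwinnableDegrees_iff G.adjMatrix_isSymm]
    simp only [exists_effective_iff_winnable, ChipFiring.unwinnableDegrees, Set.mem_ofPred_eq]
    push Not
    rfl
  have hrank := ChipFiring.neg_one_le_rank G.adjMatrix_isSymm D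
  simp only [Multigraph.rank, hmem]
  refine IsGreatest.csSup_eq ⟨?_, ?_⟩
  · simp only [Set.mem_ofPred_eq]
    lia
  · rintro r (rfl | ⟨-, hr⟩)
    exacts [hrank, hr]

theorem sum_valency : ∑ v, (G.valency v : ℤ) = 2 * Fintype.card G.E := by
  simp only [valency, Nat.cast_sum]
  rw [sum_comm]
  simp [sum_add_distrib, mul_comm, one_add_one_eq_two]

theorem degree_canonical : degree G.canonical = 2 * G.genus - 2 := by
  simp only [degree, canonical, sum_sub_distrib, sum_valency, genus, sum_const, card_univ,
    nsmul_eq_mul]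
  ring

theorem Loopless.canonical_adjMatrix {G : Multigraph} (hG : G.Loopless) :
    ChipFiring.canonical G.adjMatrix = G.canonical := by
  have hloops (v : G.V) : G.numLoops v = 0 :=
    card_eq_zero.2 (filter_eq_empty_iff.2 fun e _ he ↦ hG e (by rw [he]))
  ext v
  simp [ChipFiring.canonical, sum_compl_singleton_adjMatrix, hloops, canonical]

theorem riemann_roch_of_loopless {G : Multigraph} (hG : G.Connected) (hloop : G.Loopless)
    (D : G.V → ℤ) :
    G.rank D - G.rank (G.canonical - D) = degree D - G.genus + 1 := by
  have : Nonempty G.V := hG.1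
  rw [rank_eq, rank_eq, ← hloop.canonical_adjMatrix]
  refine ChipFiring.riemann_roch G.adjMatrix_isSymm G.adjMatrix_nonneg hG.adjMatrix ?_ D
  rw [hloop.canonical_adjMatrix]
  exact G.degree_canonical

section Subdivide

variable (n : G.E → ℕ)

theorem fst_ends_subdivide_eq_inl_iff {e : G.E} {i : Fin (n e + 1)} {v : G.V} :
    ((G.subdivide n).ends ⟨e, i⟩).1 = Sum.inl v ↔ i = 0 ∧ (G.ends e).1 = v := by
  by_cases hi : i = 0 <;> simp [subdivide, hi]

theorem snd_ends_subdivide_eq_inl_iff {e : G.E} {i : Fin (n e + 1)} {v : G.V} :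
    ((G.subdivide n).ends ⟨e, i⟩).2 = Sum.inl v ↔ i = Fin.last (n e) ∧ (G.ends e).2 = v := by
  rw [Fin.ext_iff, Fin.val_last]
  by_cases hi : (i : ℕ) = n e <;> simp [subdivide, hi]

theorem fst_ends_subdivide_eq_inr_iff {e e' : G.E} {i : Fin (n e + 1)} {j : Fin (n e')} :
    ((G.subdivide n).ends ⟨e, i⟩).1 = Sum.inr ⟨e', j⟩ ↔
      (⟨e, i⟩ : Σ e, Fin (n e + 1)) = ⟨e', j.succ⟩ := by
  obtain rfl | he := eq_or_ne e e'
  · cases i using Fin.cases <;> simp [subdivide, (Fin.succ_ne_zero _).symm]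
  · by_cases hi : i = 0 <;> simp [subdivide, hi, he]

theorem snd_ends_subdivide_eq_inr_iff {e e' : G.E} {i : Fin (n e + 1)} {j : Fin (n e')} :
    ((G.subdivide n).ends ⟨e, i⟩).2 = Sum.inr ⟨e', j⟩ ↔
      (⟨e, i⟩ : Σ e, Fin (n e + 1)) = ⟨e', j.castSucc⟩ := by
  obtain rfl | he := eq_or_ne e e'
  · cases i using Fin.lastCases with
    | last => simp [subdivide, (Fin.castSucc_ne_last _).symm]
    | cast i => simp [subdivide, i.isLt.ne]
  · by_cases hi : (i : ℕ) = n e <;> simp [subdivide, hi, he]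

theorem valency_subdivide (u : (G.subdivide n).V) :
    (G.subdivide n).valency u =
      ∑ e, ∑ i : Fin (n e + 1), (if ((G.subdivide n).ends ⟨e, i⟩).1 = u then 1 else 0) +
      ∑ e, ∑ i : Fin (n e + 1), (if ((G.subdivide n).ends ⟨e, i⟩).2 = u then 1 else 0) := by
  simp only [valency, sum_add_distrib]
  exact congrArg₂ (· + ·) (Fintype.sum_sigma _) (Fintype.sum_sigma _)

theorem valency_subdivide_inl (v : G.V) :
    (G.subdivide n).valency (Sum.inl v) = G.valency v := by
  refine (G.valency_subdivide n (Sum.inl v)).trans ?_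
  simp only [fst_ends_subdivide_eq_inl_iff, snd_ends_subdivide_eq_inl_iff, ite_and, sum_ite_eq',
    mem_univ, if_true, valency, sum_add_distrib]

theorem valency_subdivide_inr (y : Σ e, Fin (n e)) :
    (G.subdivide n).valency (Sum.inr y) = 2 := by
  obtain ⟨e, i⟩ := y
  refine (G.valency_subdivide n (Sum.inr ⟨e, i⟩)).trans ?_
  simp only [fst_ends_subdivide_eq_inr_iff, snd_ends_subdivide_eq_inr_iff]
  have hcount (x₀ : Σ e, Fin (n e + 1)) :
      ∑ e, ∑ i, (if (⟨e, i⟩ : Σ e, Fin (n e + 1)) = x₀ then 1 else 0) = 1 :=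
    (Fintype.sum_sigma fun x ↦ if x = x₀ then 1 else 0).symm.trans (by simp)
  rw [hcount, hcount]

theorem canonical_subdivide :
    (G.subdivide n).canonical = G.subdivMap n G.canonical := by
  ext (v | y)
  · simp [canonical, subdivMap, valency_subdivide_inl]
  · simp [canonical, subdivMap, valency_subdivide_inr]

theorem subdivMap_sub (D D' : G.V → ℤ) :
    G.subdivMap n (D - D') = G.subdivMap n D - G.subdivMap n D' := by
  ext (_ | _)
  exacts [rfl, (sub_zero 0).symm]

theorem degree_subdivMap (D : G.V → ℤ) :
    degree (G.subdivMap n D) = degree D :=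
  (Fintype.sum_sum_type _).trans (by simp [degree, subdivMap])

theorem genus_subdivide : (G.subdivide n).genus = G.genus := by
  change (Fintype.card (Σ e, Fin (n e + 1)) : ℤ) - Fintype.card (G.V ⊕ Σ e, Fin (n e)) + 1 = _
  simp only [genus, Fintype.card_sigma, Fintype.card_sum, Fintype.card_fin, sum_add_distrib,
    sum_const, card_univ, smul_eq_mul, mul_one, Nat.cast_add]
  ring

variable {G n}

theorem loopless_subdivide (hn : ∀ e, (G.ends e).1 = (G.ends e).2 → n e ≠ 0) :
    (G.subdivide n).Loopless := by
  rintro ⟨e, i⟩ hx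
  rcases h : ((G.subdivide n).ends ⟨e, i⟩).2 with v | ⟨e', j⟩
  · rw [h, fst_ends_subdivide_eq_inl_iff] at hx
    rw [snd_ends_subdivide_eq_inl_iff] at h
    refine hn e (hx.2.trans h.2.symm) ?_
    simpa using congrArg Fin.val (h.1.symm.trans hx.1)
  · rw [h, fst_ends_subdivide_eq_inr_iff] at hx
    rw [snd_ends_subdivide_eq_inr_iff, hx] at h
    simp [Fin.ext_iff] at h

theorem reflTransGen_ends_subdivide (e : G.E) (i : Fin (n e + 1)) :
    ReflTransGen (G.subdivide n).Adj (Sum.inl (G.ends e).1) ((G.subdivide n).ends ⟨e, i⟩).2 := by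
  induction i using Fin.induction with
  | zero =>
    refine .single ⟨⟨e, 0⟩, .inl (Prod.ext ?_ rfl)⟩
    exact (G.fst_ends_subdivide_eq_inl_iff n).2 ⟨rfl, rfl⟩
  | succ i ih =>
    refine ih.tail ⟨⟨e, i.succ⟩, .inl (Prod.ext ?_ rfl)⟩
    rw [(G.snd_ends_subdivide_eq_inr_iff n).2 (rfl : _ = (⟨e, i.castSucc⟩ : Σ e, Fin (n e + 1)))]
    exact (G.fst_ends_subdivide_eq_inr_iff n).2 rfl

theorem reflTransGen_subdivide_inl {v w : G.V} (h : ReflTransGen G.Adj v w) :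
    ReflTransGen (G.subdivide n).Adj (Sum.inl v) (Sum.inl w) := by
  refine h.lift' Sum.inl fun v w hvw ↦ ?_
  obtain ⟨e, he⟩ := hvw
  have hedge := reflTransGen_ends_subdivide (n := n) e (Fin.last _)
  rw [(G.snd_ends_subdivide_eq_inl_iff n).2 ⟨rfl, rfl⟩] at hedge
  obtain he | he := he <;> rw [he] at hedge
  exacts [hedge, reflTransGen_adj_symm hedge]

theorem Connected.subdivide (hG : G.Connected) (n : G.E → ℕ) : (G.subdivide n).Connected := by
  obtain ⟨v₀⟩ := hG.1
  have hreach : ∀ x : (G.subdivide n).V,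
      ReflTransGen (G.subdivide n).Adj (Sum.inl v₀) x := by
    rintro (v | ⟨e, i⟩)
    · exact reflTransGen_subdivide_inl (hG.2 v₀ v)
    · have hedge := reflTransGen_ends_subdivide (n := n) e i.castSucc
      rw [(G.snd_ends_subdivide_eq_inr_iff n).2 rfl] at hedge
      exact (reflTransGen_subdivide_inl (hG.2 v₀ _)).trans hedge
  exact ⟨⟨Sum.inl v₀⟩, fun x y ↦ (reflTransGen_adj_symm (hreach x)).trans (hreach y)⟩

end Subdivide

theorem riemann_roch_rankSharp {G : Multigraph} (hG : G.Connected) (D : G.V → ℤ) :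
    G.rankSharp D - G.rankSharp (G.canonical - D) = degree D - G.genus + 1 := by
  have hloop : G.hat.Loopless := loopless_subdivide fun e he ↦ by simp [he]
  have hrr := riemann_roch_of_loopless (hG.subdivide _) hloop (G.subdivMap _ D)
  rwa [canonical_subdivide, ← subdivMap_sub, degree_subdivMap, genus_subdivide] at hrr

theorem Connected.virt {G : Multigraph} (hG : G.Connected) (w : G.V → ℕ) :
    (G.virt w).Connected := by
  refine ⟨hG.1, fun u v ↦ ReflTransGen.mono (r := G.Adj) (fun x y h ↦ ?_) u v (hG.2 u v)⟩
  obtain ⟨e, he⟩ := h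
  exact ⟨Sum.inl e, he⟩

theorem valency_virt (w : G.V → ℕ) (v : G.V) : (G.virt w).valency v = G.valency v + 2 * w v := by
  refine (Fintype.sum_sum_type _).trans (congrArg (G.valency v + ·) ?_)
  refine (Fintype.sum_sigma _).trans ?_
  change ∑ u, ∑ _ : Fin (w u), ((if u = v then 1 else 0) + (if u = v then 1 else 0)) = _
  simp [← two_mul, mul_comm]

theorem canonical_virt (w : G.V → ℕ) : (G.virt w).canonical = G.canonicalW w := by
  ext v
  simp only [canonical, canonicalW, valency_virt G w v]
  push_cast
  rfl

theorem genus_virt (w : G.V → ℕ) : (G.virt w).genus = G.genusW w := by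
  change (Fintype.card (G.E ⊕ Σ v, Fin (w v)) : ℤ) - Fintype.card G.V + 1 = _
  simp only [genus, genusW, Fintype.card_sigma, Fintype.card_sum, Fintype.card_fin]
  push_cast
  ring

end Multigraph

open Multigraph in
/-- Riemann–Roch for weighted graphs.  For a connected weighted
graph `(G, ω)` of genus `g = b₁(G) + Σ_v ω(v)` and any divisor `D`,
`r_{(G,ω)}(D) - r_{(G,ω)}(K_{(G,ω)} - D) = deg D - g + 1`. -/
theorem riemann_roch_weighted_graph (G : Multigraph) (hG : G.Connected)
    (w : G.V → ℕ) (D : G.V → ℤ) :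
    G.rankW w D - G.rankW w (G.canonicalW w - D)
      = Multigraph.degree D - G.genusW w + 1 := by
  have hrr := riemann_roch_rankSharp (hG.virt w) D
  rwa [genus_virt, canonical_virt] at hrr
end

section
/- Let G be a connected graph, possibly with loops, and let r_G(D) denote the rank of D computed disregarding the loops of G (i.e., the Baker–Norine rank on the graph obtained from G by removing all loop-edges). Then for every D ∈ Div(G): r_G(D) ≥ r#_G(D). -/
namespace Multigraph

variable {G H K : Multigraph}

section Pushforward

variable {α β : Type} [Fintype α] [Fintype β]

/-- The pushforward `f_* : Div → Div` of divisors along a map `f` of vertices. -/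
noncomputable abbrev pushforward (f : α → β) : (α → ℤ) →ₗ[ℤ] (β → ℤ) :=
  FunOnFinite.linearMap ℤ ℤ f

lemma Effective.pushforward (f : α → β) {D : α → ℤ} (hD : Effective D) :
    Effective (pushforward f D) := by
  classical
  intro b
  rw [FunOnFinite.linearMap_apply_apply]
  exact Finset.sum_nonneg fun a _ => hD a

lemma degree_pushforward (f : α → β) (D : α → ℤ) : degree (pushforward f D) = degree D := by
  classical
  simp only [degree, FunOnFinite.linearMap_apply_apply]
  exact Finset.sum_fiberwise _ f D

lemma pushforward_pushforward_of_leftInverse {f : α → β} {g : β → α}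
    (h : Function.LeftInverse f g) (D : β → ℤ) : pushforward f (pushforward g D) = D := by
  rw [← LinearMap.comp_apply, ← FunOnFinite.linearMap_comp, h.comp_eq_id,
    FunOnFinite.linearMap_id, LinearMap.id_apply]

lemma Effective.degree_nonneg {D : α → ℤ} (hD : Effective D) : 0 ≤ degree D :=
  Finset.sum_nonneg fun v _ => hD v

lemma degree_sub (D E : α → ℤ) : degree (D - E) = degree D - degree E :=
  Finset.sum_sub_distrib D E

end Pushforward

section Boundary

/-- The boundary `e₂ - e₁` of an edge with endpoints `(e₁, e₂)`, as a divisor. Principal divisors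
are quadratic in it, hence independent of the chosen orientation. -/
def boundary (G : Multigraph) (e : G.E) : G.V → ℤ :=
  Pi.single (G.ends e).2 1 - Pi.single (G.ends e).1 1

lemma inter_eq_neg_sum_boundary (v w : G.V) :
    G.inter v w = -∑ e, G.boundary e v * G.boundary e w := by
  rw [← Finset.sum_neg_distrib]
  simp only [inter, boundary, Pi.sub_apply, Pi.single_apply]
  split_ifs with hvw
  · -- A loop at `v` has zero boundary: `2 loop(v)` cancels its contribution to `val(v)`.
    subst hvw
    simp only [valency, numLoops, Finset.card_filter, Nat.cast_sum, Finset.mul_sum,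
      ← Finset.sum_neg_distrib, ← Finset.sum_add_distrib]
    refine Finset.sum_congr rfl fun e _ => ?_
    grind
  · simp only [numEdges, Finset.card_filter, Nat.cast_sum]
    refine Finset.sum_congr rfl fun e _ => ?_
    grind

lemma T_eq_neg_sum_boundary (v : G.V) : G.T v = -∑ e, G.boundary e v • G.boundary e := by
  ext w
  simp [T, inter_eq_neg_sum_boundary]

lemma pushforward_boundary {β : Type} [Fintype β] [DecidableEq β] (f : G.V → β) (e : G.E) :
    pushforward f (G.boundary e) = Pi.single (f (G.ends e).2) 1 - Pi.single (f (G.ends e).1) 1 := by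
  simp [boundary]

lemma degree_boundary (e : G.E) : degree (G.boundary e) = 0 := by
  simp [boundary, degree]

lemma degree_T (v : G.V) : degree (G.T v) = 0 := by
  calc degree (G.T v) = -∑ e, G.boundary e v * degree (G.boundary e) := by
        simp only [degree, T, inter_eq_neg_sum_boundary, Finset.sum_neg_distrib, Finset.mul_sum]
        rw [Finset.sum_comm]
    _ = 0 := by simp [degree_boundary]

lemma degree_eq_zero_of_mem_Prin {D : G.V → ℤ} (hD : D ∈ G.Prin) : degree D = 0 := by
  induction hD using AddSubgroup.closure_induction with
  | mem _ h => obtain ⟨v, rfl⟩ := h; exact degree_T v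
  | zero => simp [degree]
  | add _ _ _ _ h₁ h₂ => simp_all [degree, Finset.sum_add_distrib]
  | neg _ _ h => simp_all [degree]

end Boundary

section Rank

/-- `D` has rank at least `r ≥ 0`: subtracting any effective divisor of degree `r` leaves `D`
linearly equivalent to an effective divisor. -/
def RankAtLeast (G : Multigraph) (D : G.V → ℤ) (r : ℤ) : Prop :=
  ∀ E : G.V → ℤ, Effective E → degree E = r → ∃ F : G.V → ℤ, Effective F ∧ D - E - F ∈ G.Prin

lemma RankAtLeast.le_degree [Nonempty G.V] {D : G.V → ℤ} {r : ℤ} (h : G.RankAtLeast D r)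
    (hr : 0 ≤ r) : r ≤ degree D := by
  obtain ⟨v⟩ := ‹Nonempty G.V›
  have hE : (0 : G.V → ℤ) ≤ Pi.single v r := Pi.single_nonneg.2 hr
  have hdegE : degree (Pi.single v r : G.V → ℤ) = r := by simp [degree]
  obtain ⟨F, hF, hDF⟩ := h (Pi.single v r) hE hdegE
  have hdeg := degree_eq_zero_of_mem_Prin hDF
  rw [degree_sub, degree_sub, hdegE] at hdeg
  linarith [hF.degree_nonneg]

lemma rank_le_rank_of_rankAtLeast [Nonempty K.V] {D : H.V → ℤ} {D' : K.V → ℤ}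
    (h : ∀ r, H.RankAtLeast D r → K.RankAtLeast D' r) : H.rank D ≤ K.rank D' := by
  refine csSup_le_csSup ⟨max (-1) (degree D'), ?_⟩ ⟨-1, Or.inl rfl⟩ ?_
  · rintro r (rfl | ⟨hr, hD'⟩)
    · exact le_max_left _ _
    · exact le_max_of_le_right (RankAtLeast.le_degree hD' hr)
  · exact fun r => Or.imp_right (And.imp_right (h r))

end Rank

/-- A retraction of the multigraph `H` onto a subgraph isomorphic to `K`, which contracts every
edge of `H` outside this subgraph. Since `H` may have parallel edges, the embedding of `K` is
given on edges as well; the isomorphism matches the orientations. -/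
structure Retraction (H K : Multigraph) where
  proj : H.V → K.V
  incl : K.V → H.V
  inclEdge : K.E → H.E
  leftInverse : Function.LeftInverse proj incl
  inclEdge_injective : Function.Injective inclEdge
  ends_inclEdge : ∀ e, H.ends (inclEdge e) = Prod.map incl incl (K.ends e)
  proj_ends : ∀ e ∉ Set.range inclEdge, proj (H.ends e).1 = proj (H.ends e).2

namespace Retraction

variable (ρ : Retraction H K)

lemma boundary_inclEdge_apply_incl (e : K.E) (v : K.V) :
    H.boundary (ρ.inclEdge e) (ρ.incl v) = K.boundary e v := by
  simp [boundary, ρ.ends_inclEdge, Pi.single_apply, ρ.leftInverse.injective.eq_iff]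

lemma boundary_inclEdge_apply_of_notMem_range (e : K.E) {x : H.V} (hx : x ∉ Set.range ρ.incl) :
    H.boundary (ρ.inclEdge e) x = 0 := by
  have hne (v : K.V) : x ≠ ρ.incl v := fun h => hx ⟨v, h.symm⟩
  simp [boundary, ρ.ends_inclEdge, hne]

lemma pushforward_boundary_inclEdge (e : K.E) :
    pushforward ρ.proj (H.boundary (ρ.inclEdge e)) = K.boundary e := by
  rw [pushforward_boundary, ρ.ends_inclEdge, Prod.map_fst, Prod.map_snd, ρ.leftInverse,
    ρ.leftInverse, boundary]

lemma pushforward_boundary_of_notMem_range {e : H.E} (he : e ∉ Set.range ρ.inclEdge) :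
    pushforward ρ.proj (H.boundary e) = 0 := by
  rw [pushforward_boundary, ρ.proj_ends e he, sub_self]

lemma pushforward_T (x : H.V) :
    pushforward ρ.proj (H.T x) = -∑ e, H.boundary (ρ.inclEdge e) x • K.boundary e := by
  simp only [T_eq_neg_sum_boundary, map_neg, map_sum, map_smul]
  congr 1
  refine (Fintype.sum_of_injective ρ.inclEdge ρ.inclEdge_injective _ _ (fun e he => ?_)
    fun e => ?_).symm
  · rw [ρ.pushforward_boundary_of_notMem_range he, smul_zero]
  · rw [ρ.pushforward_boundary_inclEdge]

lemma pushforward_T_incl (v : K.V) : pushforward ρ.proj (H.T (ρ.incl v)) = K.T v := by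
  rw [pushforward_T, T_eq_neg_sum_boundary]
  simp only [boundary_inclEdge_apply_incl]

lemma pushforward_T_of_notMem_range {x : H.V} (hx : x ∉ Set.range ρ.incl) :
    pushforward ρ.proj (H.T x) = 0 := by
  simp [pushforward_T, ρ.boundary_inclEdge_apply_of_notMem_range _ hx]

lemma pushforward_mem_Prin {D : H.V → ℤ} (hD : D ∈ H.Prin) : pushforward ρ.proj D ∈ K.Prin := by
  suffices H.Prin ≤ K.Prin.comap (pushforward ρ.proj).toAddMonoidHom from this hD
  refine (AddSubgroup.closure_le _).2 ?_
  rintro _ ⟨x, rfl⟩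
  change pushforward ρ.proj (H.T x) ∈ K.Prin
  by_cases hx : x ∈ Set.range ρ.incl
  · obtain ⟨v, rfl⟩ := hx
    rw [pushforward_T_incl]
    exact AddSubgroup.subset_closure ⟨v, rfl⟩
  · rw [ρ.pushforward_T_of_notMem_range hx]
    exact K.Prin.zero_mem

lemma rankAtLeast_pushforward {D : H.V → ℤ} {r : ℤ} (hD : H.RankAtLeast D r) :
    K.RankAtLeast (pushforward ρ.proj D) r := by
  intro E hE hdeg
  obtain ⟨F, hF, hDF⟩ := hD (pushforward ρ.incl E) (hE.pushforward _)
    ((degree_pushforward _ E).trans hdeg)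
  refine ⟨pushforward ρ.proj F, hF.pushforward _, ?_⟩
  have := ρ.pushforward_mem_Prin hDF
  rwa [map_sub, map_sub, pushforward_pushforward_of_leftInverse ρ.leftInverse] at this

theorem rank_le_rank_pushforward [Nonempty K.V] (D : H.V → ℤ) :
    H.rank D ≤ K.rank (pushforward ρ.proj D) :=
  rank_le_rank_of_rankAtLeast fun _ => ρ.rankAtLeast_pushforward

end Retraction

section SubdivideLoops

variable (G) (n : G.E → ℕ)

/-- The map from the vertices of a refinement of `G` to those of `G` that moves the new vertices on
an edge `e` to the first endpoint of `e`. -/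
def subdivideProj : (G.subdivide n).V → G.V :=
  Sum.elim id fun x => (G.ends x.1).1

lemma subdivMap_eq_pushforward (D : G.V → ℤ) :
    G.subdivMap n D = pushforward (β := (G.subdivide n).V) Sum.inl D := by
  ext x
  refine Eq.trans ?_ (FunOnFinite.linearMap_apply_apply ℤ ℤ _ D x).symm
  rcases x with v | x
  · change D v = ∑ w with Sum.inl w = Sum.inl v, D w
    simp [Finset.filter_eq']
  · change 0 = ∑ w with Sum.inl w = Sum.inr x, D w
    simp

variable {G n}

lemma subdivideProj_ends_of_isLoop {e : G.E} (he : G.IsLoop e) (i : Fin (n e + 1)) :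
    G.subdivideProj n ((G.subdivide n).ends ⟨e, i⟩).1 =
      G.subdivideProj n ((G.subdivide n).ends ⟨e, i⟩).2 := by
  have hfst : G.subdivideProj n ((G.subdivide n).ends ⟨e, i⟩).1 = (G.ends e).1 := by
    simp only [subdivide, subdivideProj]
    split_ifs <;> rfl
  have hsnd : G.subdivideProj n ((G.subdivide n).ends ⟨e, i⟩).2 = (G.ends e).1 := by
    simp only [subdivide, subdivideProj]
    split_ifs
    exacts [he.symm, rfl]
  rw [hfst, hsnd]

/-- If only loops of `G` are subdivided, the refinement retracts onto the loopless graph by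
contracting each subdivided loop to its base point. -/
def subdivideLoopsRetraction (hn : ∀ e, ¬ G.IsLoop e → n e = 0) :
    Retraction (G.subdivide n) G.removeLoops where
  proj := G.subdivideProj n
  incl := Sum.inl
  inclEdge e := ⟨e.1, 0⟩
  leftInverse _ := rfl
  inclEdge_injective _ _ h := Subtype.ext (congrArg Sigma.fst h)
  ends_inclEdge e := Prod.ext rfl (dif_pos (hn e.1 e.2).symm)
  proj_ends := by
    rintro ⟨e, i⟩ hi
    by_cases he : G.IsLoop e
    · exact subdivideProj_ends_of_isLoop he i
    · have : Subsingleton (Fin (n e + 1)) := Fin.subsingleton_iff_le_one.2 (by simp [hn e he])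
      exact absurd ⟨⟨e, he⟩, congrArg (Sigma.mk e) (Subsingleton.elim 0 i)⟩ hi

end SubdivideLoops

end Multigraph

open Multigraph in
theorem rank_removeLoops_ge_rankSharp_general (G : Multigraph) [Nonempty G.V] (n : G.E → ℕ)
    (hn : ∀ e, ¬ G.IsLoop e → n e = 0) (D : G.V → ℤ) :
    (G.subdivide n).rank (G.subdivMap n D) ≤ G.removeLoops.rank D := by
  have : Nonempty G.removeLoops.V := ‹Nonempty G.V›
  let ρ := subdivideLoopsRetraction hn
  calc (G.subdivide n).rank (G.subdivMap n D)
      ≤ G.removeLoops.rank (pushforward ρ.proj (G.subdivMap n D)) := ρ.rank_le_rank_pushforward _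
    _ = G.removeLoops.rank D := by
      rw [subdivMap_eq_pushforward]
      exact congrArg _ (pushforward_pushforward_of_leftInverse ρ.leftInverse D)

open Multigraph in
/-- For a connected graph `G` (possibly with loops),
`r_G(D) ≥ r#_G(D)`, where `r_G` is the rank computed on the graph obtained from `G` by
removing all loop-edges. -/
theorem rank_removeLoops_ge_rankSharp (G : Multigraph) (hG : G.Connected) (D : G.V → ℤ) :
    G.rankSharp D ≤ G.removeLoops.rank D := by
  have := hG.1
  exact rank_removeLoops_ge_rankSharp_general G _ (fun _ he => if_neg he) D
end
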